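/- arXiv:1901.09813 — 2 statements merged into one kernel-verified Lean document; each statement's English description precedes it below -/
import Mathlib

section
/- If w_* and each w_i (i ∈ W) have embeddings w⃗_* and w⃗_i with respect to C (i.e. Cᵀ.mulVec w⃗_i = PMI_i), then w⃗_* = (∑_{i∈W} w⃗_i) + C†.mulVec( ρ^{W,w_*} + σ^W − τ^W·𝟙 ), where ρ^{W,w_*}, σ^W ∈ ℝ^n are the vectors with components ρ^{W,w_*}_j, σ^W_j. (Paper's Theorem 1: Paraphrase.) -/
open MeasureTheory Real Finset Matrix

namespace AnalogiesExplained

variable {Ω : Type*}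

/-- Conditional probability `p(B ∣ A) = μ(A ∩ B) / μ(A)` (as a real number). -/
noncomputable def condP [MeasurableSpace Ω] (μ : Measure Ω) (A B : Set Ω) : ℝ :=
  (μ (A ∩ B)).toReal / (μ A).toReal

/-- Pointwise mutual information `PMI(A, B) = log (μ(A ∩ B) / (μ(A)·μ(B)))`. -/
noncomputable def PMI [MeasurableSpace Ω] (μ : Measure Ω) (A B : Set Ω) : ℝ :=
  Real.log ((μ (A ∩ B)).toReal / ((μ A).toReal * (μ B).toReal))

/-- The joint event of a finite word set: `A_W = ⋂ i ∈ W, A i`. -/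
def jointEvent {ι : Type*} (A : ι → Set Ω) (W : Finset ι) : Set Ω :=
  ⋂ i ∈ W, A i

/-- Paraphrase error `ρ^{W,W*}_j = log (p(B_j ∣ A_{W*}) / p(B_j ∣ A_W))`. -/
noncomputable def rho [MeasurableSpace Ω] (μ : Measure Ω) (AW AWstar B : Set Ω) : ℝ :=
  Real.log (condP μ AWstar B / condP μ AW B)

/-- Conditional-dependence error `σ^W_j = log (p(A_W ∣ B_j) / ∏_{i ∈ W} p(A_i ∣ B_j))`. -/
noncomputable def sigma [MeasurableSpace Ω] {ι : Type*} (μ : Measure Ω) (A : ι → Set Ω)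
    (W : Finset ι) (B : Set Ω) : ℝ :=
  Real.log (condP μ B (jointEvent A W) / ∏ i ∈ W, condP μ B (A i))

/-- Marginal-dependence error `τ^W = log (μ(A_W) / ∏_{i ∈ W} μ(A_i))`. -/
noncomputable def tau [MeasurableSpace Ω] {ι : Type*} (μ : Measure Ω) (A : ι → Set Ω)
    (W : Finset ι) : ℝ :=
  Real.log ((μ (jointEvent A W)).toReal / ∏ i ∈ W, (μ (A i)).toReal)

/-!
Bayes' rule writes `PMI μ A B` both as `log (p(B ∣ A) / p(B))` and as `log (p(A ∣ B) / p(A))`.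
The first form turns `ρ` into `PMI(w_*, c) - PMI(W, c)`, the second turns `σ - τ` into
`PMI(W, c) - ∑ i ∈ W, PMI(w_i, c)`. Hence `Cᵀ` maps `w⃗_*` and `∑ i ∈ W, w⃗_i` to vectors that
differ by `ρ + σ - τ·𝟙`, and a left inverse of `Cᵀ` recovers `w⃗_*`.
-/

theorem log_div_prod {ι : Type*} {s : Finset ι} {f : ι → ℝ} {x : ℝ} (hx : x ≠ 0)
    (hf : ∀ i ∈ s, f i ≠ 0) : log (x / ∏ i ∈ s, f i) = log x - ∑ i ∈ s, log (f i) := by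
  rw [log_div hx (prod_ne_zero_iff.2 hf), log_prod hf]

theorem eq_add_mulVec_of_mul_eq_one {m k R : Type*} [Fintype m] [Fintype k] [DecidableEq k]
    [Semiring R] {G : Matrix k m R} {M : Matrix m k R} (hGM : G * M = 1) {v w : k → R}
    {e : m → R} (h : M *ᵥ w = M *ᵥ v + e) : w = v + G *ᵥ e :=
  calc
    w = G *ᵥ (M *ᵥ w) := by rw [mulVec_mulVec, hGM, one_mulVec]
    _ = v + G *ᵥ e := by rw [h, mulVec_add, mulVec_mulVec, hGM, one_mulVec]

theorem gram_inv_mul_mul_transpose {m k R : Type*} [Fintype m] [Fintype k] [DecidableEq k]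
    [CommRing R] {C : Matrix k m R} (hC : IsUnit (C * Cᵀ)) : (C * Cᵀ)⁻¹ * C * Cᵀ = 1 := by
  rw [Matrix.mul_assoc, nonsing_inv_mul _ ((isUnit_iff_isUnit_det _).1 hC)]

section Events

variable [MeasurableSpace Ω] {μ : Measure Ω} {A B : Set Ω}

theorem condP_pos (hA : 0 < (μ A).toReal) (hAB : 0 < (μ (A ∩ B)).toReal) : 0 < condP μ A B :=
  div_pos hAB hA

theorem PMI_comm (μ : Measure Ω) (A B : Set Ω) : PMI μ A B = PMI μ B A := by
  rw [PMI, PMI, Set.inter_comm, mul_comm]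

theorem PMI_eq_log_condP_sub_log (hA : 0 < (μ A).toReal) (hB : 0 < (μ B).toReal)
    (hAB : 0 < (μ (A ∩ B)).toReal) :
    PMI μ A B = log (condP μ A B) - log (μ B).toReal := by
  rw [← log_div (condP_pos hA hAB).ne' hB.ne', PMI, condP, div_div]

theorem rho_eq_PMI_sub_PMI {A' : Set Ω} (hA : 0 < (μ A).toReal) (hA' : 0 < (μ A').toReal)
    (hB : 0 < (μ B).toReal) (hAB : 0 < (μ (A ∩ B)).toReal) (hA'B : 0 < (μ (A' ∩ B)).toReal) :
    rho μ A A' B = PMI μ A' B - PMI μ A B := by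
  rw [rho, log_div (condP_pos hA' hA'B).ne' (condP_pos hA hAB).ne',
    PMI_eq_log_condP_sub_log hA' hB hA'B, PMI_eq_log_condP_sub_log hA hB hAB,
    sub_sub_sub_cancel_right]

theorem sigma_sub_tau_eq_PMI_sub_sum {ι : Type*} {A : ι → Set Ω} {W : Finset ι}
    (hA : ∀ i ∈ W, 0 < (μ (A i)).toReal) (hB : 0 < (μ B).toReal)
    (hAW : 0 < (μ (jointEvent A W)).toReal) (hAB : ∀ i ∈ W, 0 < (μ (A i ∩ B)).toReal)
    (hAWB : 0 < (μ (jointEvent A W ∩ B)).toReal) :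
    sigma μ A W B - tau μ A W = PMI μ (jointEvent A W) B - ∑ i ∈ W, PMI μ (A i) B := by
  simp only [Set.inter_comm _ B] at hAB hAWB
  have sigma_eq : sigma μ A W B =
      log (condP μ B (jointEvent A W)) - ∑ i ∈ W, log (condP μ B (A i)) :=
    log_div_prod (condP_pos hB hAWB).ne' fun i hi ↦ (condP_pos hB (hAB i hi)).ne'
  have tau_eq : tau μ A W = log (μ (jointEvent A W)).toReal - ∑ i ∈ W, log (μ (A i)).toReal :=
    log_div_prod hAW.ne' fun i hi ↦ (hA i hi).ne'
  have sum_PMI_eq : ∑ i ∈ W, PMI μ (A i) B =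
      ∑ i ∈ W, log (condP μ B (A i)) - ∑ i ∈ W, log (μ (A i)).toReal := by
    rw [← sum_sub_distrib]
    refine sum_congr rfl fun i hi ↦ ?_
    rw [PMI_comm, PMI_eq_log_condP_sub_log hB (hA i hi) (hAB i hi)]
  rw [sigma_eq, tau_eq, sum_PMI_eq, PMI_comm, PMI_eq_log_condP_sub_log hB hAW hAWB,
    sub_sub_sub_comm]

theorem PMI_eq_sum_add_rho_add_sigma_sub_tau {ι : Type*} {A : ι → Set Ω} {Astar : Set Ω}
    {W : Finset ι} (hA : ∀ i ∈ W, 0 < (μ (A i)).toReal) (hB : 0 < (μ B).toReal)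
    (hAs : 0 < (μ Astar).toReal) (hAW : 0 < (μ (jointEvent A W)).toReal)
    (hAB : ∀ i ∈ W, 0 < (μ (A i ∩ B)).toReal) (hAsB : 0 < (μ (Astar ∩ B)).toReal)
    (hAWB : 0 < (μ (jointEvent A W ∩ B)).toReal) :
    PMI μ Astar B = ∑ i ∈ W, PMI μ (A i) B +
      (rho μ (jointEvent A W) Astar B + sigma μ A W B - tau μ A W) := by
  rw [add_sub_assoc, rho_eq_PMI_sub_PMI hAW hAs hB hAWB hAsB,
    sigma_sub_tau_eq_PMI_sub_sum hA hB hAW hAB hAWB]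
  ring

end Events

theorem paraphrase_embedding_general
    [MeasurableSpace Ω] (μ : Measure Ω) {ι κ δ : Type*} [Fintype κ] [Fintype δ] [DecidableEq δ]
    (A : ι → Set Ω) (Astar : Set Ω) (B : κ → Set Ω) (W : Finset ι)
    (hA : ∀ i ∈ W, 0 < (μ (A i)).toReal)
    (hB : ∀ j, 0 < (μ (B j)).toReal)
    (hAs : 0 < (μ Astar).toReal)
    (hAW : 0 < (μ (jointEvent A W)).toReal)
    (hAB : ∀ i ∈ W, ∀ j, 0 < (μ (A i ∩ B j)).toReal)
    (hAsB : ∀ j, 0 < (μ (Astar ∩ B j)).toReal)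
    (hAWB : ∀ j, 0 < (μ (jointEvent A W ∩ B j)).toReal)
    (C G : Matrix δ κ ℝ) (hG : G * Cᵀ = 1)
    (wstar : δ → ℝ) (wv : ι → δ → ℝ)
    (hws : Cᵀ *ᵥ wstar = fun j ↦ PMI μ Astar (B j))
    (hwi : ∀ i ∈ W, Cᵀ *ᵥ wv i = fun j ↦ PMI μ (A i) (B j)) :
    wstar = (∑ i ∈ W, wv i) +
      G *ᵥ fun j ↦ rho μ (jointEvent A W) Astar (B j) + sigma μ A W (B j) - tau μ A W := by
  refine eq_add_mulVec_of_mul_eq_one hG ?_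
  rw [mulVec_sum, hws, sum_congr rfl hwi]
  ext j
  rw [Pi.add_apply, Finset.sum_apply]
  exact PMI_eq_sum_add_rho_add_sigma_sub_tau hA (hB j) hAs hAW (fun i hi ↦ hAB i hi j)
    (hAsB j) (hAWB j)

/-- **Theorem 1 (Paraphrase).** If `w_*` and each `w_i` (`i ∈ W`) have embeddings w.r.t. `C`,
then `w⃗_* = (∑_{i∈W} w⃗_i) + C† (ρ^{W,w_*} + σ^W − τ^W·𝟙)`, where `C† = (C Cᵀ)⁻¹ C`. -/
theorem paraphrase_embedding
    [MeasurableSpace Ω] (μ : Measure Ω) [IsProbabilityMeasure μ]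
    {ι : Type*} (A : ι → Set Ω) (Astar : Set Ω) {n : ℕ} (B : Fin n → Set Ω)
    (W : Finset ι)
    (hmA : ∀ i, MeasurableSet (A i)) (hmB : ∀ j, MeasurableSet (B j))
    (hmAs : MeasurableSet Astar)
    (hA : ∀ i ∈ W, 0 < (μ (A i)).toReal)
    (hB : ∀ j, 0 < (μ (B j)).toReal)
    (hAs : 0 < (μ Astar).toReal)
    (hAW : 0 < (μ (jointEvent A W)).toReal)
    (hAB : ∀ i ∈ W, ∀ j, 0 < (μ (A i ∩ B j)).toReal)
    (hAsB : ∀ j, 0 < (μ (Astar ∩ B j)).toReal)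
    (hAWB : ∀ j, 0 < (μ (jointEvent A W ∩ B j)).toReal)
    {d : ℕ} (C : Matrix (Fin d) (Fin n) ℝ)
    (hC : IsUnit (C * C.transpose))
    (wstar : Fin d → ℝ) (wv : ι → Fin d → ℝ)
    (hws : C.transpose.mulVec wstar = fun j => PMI μ Astar (B j))
    (hwi : ∀ i ∈ W, C.transpose.mulVec (wv i) = fun j => PMI μ (A i) (B j)) :
    wstar = (∑ i ∈ W, wv i)
      + ((C * C.transpose)⁻¹ * C).mulVec
          (fun j => rho μ (jointEvent A W) Astar (B j) + sigma μ A W (B j) - tau μ A W) :=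
  paraphrase_embedding_general μ A Astar B W hA hB hAs hAW hAB hAsB hAWB C _
    (gram_inv_mul_mul_transpose hC) wstar wv hws hwi

end AnalogiesExplained
end

section
/- Suppose the context events B_1, …, B_n are pairwise disjoint and their union is Ω. Then the Kullback–Leibler divergence between the distributions over context words induced by the word set W and by the word w_* satisfies Δ := ∑_{j} p(B_j∣A_W) · log( p(B_j∣A_W) / p(B_j∣A_*) ) = ∑_{j} p(B_j∣A_W) · ( ∑_{i∈W} PMI(w_i, c_j) − PMI(w_*, c_j) + σ^W_j ) − τ^W. (PMI-level form of the paper's Theorem 4: Weak paraphrasing.) -/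
open MeasureTheory Real Finset Matrix

namespace AnalogiesExplained

variable {Ω : Type*}

/-!
The logarithmic ratio inside the divergence is `PMI(A_W, c_j) - PMI(A_*, c_j)`. Splitting the joint
event into its words gives `PMI(A_W, c_j) = ∑_{i ∈ W} PMI(w_i, c_j) + σ^W_j - τ^W`. Since `τ^W` does
not depend on `j`, averaging it against the probability vector `p(B_j ∣ A_W)` leaves it unchanged.
-/

section

variable [MeasurableSpace Ω] {μ : Measure Ω} {A B C : Set Ω}

theorem condP_eq_zero_iff [IsFiniteMeasure μ] : condP μ A B = 0 ↔ μ (A ∩ B) = 0 := by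
  rw [condP, div_eq_zero_iff, ← measureReal_def, ← measureReal_def, measureReal_eq_zero_iff,
    measureReal_eq_zero_iff]
  exact or_iff_left_of_imp (measure_mono_null Set.inter_subset_left)

theorem condP_eq_cond_real (hB : MeasurableSet B) :
    condP μ A B = (ProbabilityTheory.cond μ A).real B := by
  rw [measureReal_def, ProbabilityTheory.cond_apply' hB, ENNReal.toReal_mul, ENNReal.toReal_inv,
    mul_comm, ← div_eq_mul_inv, condP]

theorem hasSum_condP_eq_one [IsFiniteMeasure μ] {κ : Type*} [Countable κ] {B : κ → Set Ω}
    (hA : μ A ≠ 0) (hB : ∀ j, MeasurableSet (B j)) (hdisj : Pairwise (Function.onFun Disjoint B))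
    (hcover : ⋃ j, B j = Set.univ) :
    HasSum (fun j => condP μ A (B j)) 1 := by
  have := ProbabilityTheory.cond_isProbabilityMeasure hA
  have htsum : ∑' j, ProbabilityTheory.cond μ A (B j) = 1 := by
    rw [← measure_iUnion hdisj hB, hcover, measure_univ]
  have hsum := ENNReal.hasSum_toReal (htsum ▸ ENNReal.one_ne_top)
  rw [← ENNReal.tsum_toReal_eq fun j => measure_ne_top _ (B j), htsum, ENNReal.toReal_one] at hsum
  simpa only [condP_eq_cond_real (hB _), measureReal_def] using hsum

theorem pmi_comm : PMI μ A B = PMI μ B A := by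
  rw [PMI, PMI, Set.inter_comm, mul_comm]

theorem pmi_eq_log_condP_sub_log [IsFiniteMeasure μ] (h : μ (A ∩ B) ≠ 0) :
    PMI μ A B = log (condP μ B A) - log (μ.real A) := by
  have hcond : condP μ B A ≠ 0 := by rwa [Ne, condP_eq_zero_iff, Set.inter_comm]
  have hA : μ.real A ≠ 0 :=
    (measureReal_ne_zero_iff).mpr (mt (measure_mono_null Set.inter_subset_left) h)
  rw [← log_div hcond hA, condP, measureReal_def, div_div, PMI, Set.inter_comm, mul_comm]

theorem log_condP_div_condP [IsFiniteMeasure μ] (hA : μ (A ∩ C) ≠ 0) (hB : μ (B ∩ C) ≠ 0) :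
    log (condP μ A C / condP μ B C) = PMI μ A C - PMI μ B C := by
  rw [log_div (mt condP_eq_zero_iff.mp hA) (mt condP_eq_zero_iff.mp hB), pmi_comm (A := A),
    pmi_comm (A := B), pmi_eq_log_condP_sub_log (Set.inter_comm A C ▸ hA),
    pmi_eq_log_condP_sub_log (Set.inter_comm B C ▸ hB), sub_sub_sub_cancel_right]

end

section

variable {ι : Type*} {A : ι → Set Ω} {W : Finset ι}

theorem jointEvent_subset {i : ι} (hi : i ∈ W) : jointEvent A W ⊆ A i :=
  Set.biInter_subset_of_mem hi

variable [MeasurableSpace Ω] {μ : Measure Ω} [IsFiniteMeasure μ]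

theorem sigma_eq_log_sub_sum_log {C : Set Ω} (h : μ (jointEvent A W ∩ C) ≠ 0) :
    sigma μ A W C = log (condP μ C (jointEvent A W)) - ∑ i ∈ W, log (condP μ C (A i)) := by
  rw [Set.inter_comm] at h
  have hcond : ∀ i ∈ W, condP μ C (A i) ≠ 0 := fun i hi => mt condP_eq_zero_iff.mp <|
    mt (measure_mono_null (Set.inter_subset_inter_right C (jointEvent_subset hi))) h
  rw [sigma, log_div (mt condP_eq_zero_iff.mp h) (prod_ne_zero_iff.mpr hcond), log_prod hcond]

theorem tau_eq_log_sub_sum_log (h : μ (jointEvent A W) ≠ 0) :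
    tau μ A W = log (μ.real (jointEvent A W)) - ∑ i ∈ W, log (μ.real (A i)) := by
  have hA : ∀ i ∈ W, μ.real (A i) ≠ 0 := fun i hi =>
    (measureReal_ne_zero_iff).mpr (mt (measure_mono_null (jointEvent_subset hi)) h)
  rw [← log_prod hA, ← log_div ((measureReal_ne_zero_iff).mpr h) (prod_ne_zero_iff.mpr hA)]
  simp only [tau, measureReal_def]

theorem pmi_jointEvent {C : Set Ω} (h : μ (jointEvent A W ∩ C) ≠ 0) :
    PMI μ (jointEvent A W) C = ∑ i ∈ W, PMI μ (A i) C + sigma μ A W C - tau μ A W := by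
  have hsum : ∑ i ∈ W, PMI μ (A i) C =
      ∑ i ∈ W, log (condP μ C (A i)) - ∑ i ∈ W, log (μ.real (A i)) := by
    rw [← sum_sub_distrib]
    exact sum_congr rfl fun i hi => pmi_eq_log_condP_sub_log <|
      mt (measure_mono_null (Set.inter_subset_inter_left C (jointEvent_subset hi))) h
  rw [pmi_eq_log_condP_sub_log h, hsum, sigma_eq_log_sub_sum_log h,
    tau_eq_log_sub_sum_log (mt (measure_mono_null Set.inter_subset_left) h)]
  ring

theorem log_condP_jointEvent_div_condP {Astar C : Set Ω} (hW : μ (jointEvent A W ∩ C) ≠ 0)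
    (hstar : μ (Astar ∩ C) ≠ 0) :
    log (condP μ (jointEvent A W) C / condP μ Astar C) =
      ∑ i ∈ W, PMI μ (A i) C - PMI μ Astar C + sigma μ A W C - tau μ A W := by
  rw [log_condP_div_condP hW hstar, pmi_jointEvent hW]
  ring

theorem weak_paraphrase_pmi_general {κ : Type*} [Countable κ] {Astar : Set Ω} {B : κ → Set Ω}
    (hB : ∀ j, MeasurableSet (B j)) (hdisj : Pairwise (Function.onFun Disjoint B))
    (hcover : ⋃ j, B j = Set.univ) (hW : μ (jointEvent A W) ≠ 0)
    (hstar : ∀ j, μ (Astar ∩ B j) = 0 → μ (jointEvent A W ∩ B j) = 0) {s : ℝ}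
    (hs : HasSum (fun j => condP μ (jointEvent A W) (B j) *
      (∑ i ∈ W, PMI μ (A i) (B j) - PMI μ Astar (B j) + sigma μ A W (B j))) s) :
    HasSum (fun j => condP μ (jointEvent A W) (B j) *
      log (condP μ (jointEvent A W) (B j) / condP μ Astar (B j))) (s - tau μ A W) := by
  have htau := (hasSum_condP_eq_one hW hB hdisj hcover).mul_right (tau μ A W)
  rw [one_mul] at htau
  refine (hs.sub htau).congr_fun fun j => ?_
  by_cases hj : μ (jointEvent A W ∩ B j) = 0
  · -- A context of conditional probability zero contributes nothing, whatever its logarithms are.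
    simp only [condP_eq_zero_iff.mpr hj, zero_mul, sub_zero]
  · rw [log_condP_jointEvent_div_condP hj (mt (hstar j) hj), mul_sub]

end

/-- **Theorem 4 at the PMI level (Weak paraphrasing).** If the context events partition `Ω`, the
KL divergence between the distributions induced by `W` and by `w_*` satisfies
`Δ = ∑_j p(B_j∣A_W)·(∑_{i∈W} PMI(w_i,c_j) − PMI(w_*,c_j) + σ^W_j) − τ^W`. -/
theorem weak_paraphrase_pmi
    [MeasurableSpace Ω] (μ : Measure Ω) [IsProbabilityMeasure μ]
    {ι : Type*} (A : ι → Set Ω) (Astar : Set Ω) {n : ℕ} (B : Fin n → Set Ω)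
    (W : Finset ι)
    (hmA : ∀ i, MeasurableSet (A i)) (hmB : ∀ j, MeasurableSet (B j))
    (hmAs : MeasurableSet Astar)
    (hdisj : ∀ j k, j ≠ k → Disjoint (B j) (B k))
    (hcover : (⋃ j, B j) = Set.univ)
    (hA : ∀ i ∈ W, 0 < (μ (A i)).toReal)
    (hB : ∀ j, 0 < (μ (B j)).toReal)
    (hAs : 0 < (μ Astar).toReal)
    (hAW : 0 < (μ (jointEvent A W)).toReal)
    (hAB : ∀ i ∈ W, ∀ j, 0 < (μ (A i ∩ B j)).toReal)
    (hAsB : ∀ j, 0 < (μ (Astar ∩ B j)).toReal)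
    (hAWB : ∀ j, 0 < (μ (jointEvent A W ∩ B j)).toReal) :
    (∑ j, condP μ (jointEvent A W) (B j) *
        Real.log (condP μ (jointEvent A W) (B j) / condP μ Astar (B j)))
      = (∑ j, condP μ (jointEvent A W) (B j) *
          ((∑ i ∈ W, PMI μ (A i) (B j)) - PMI μ Astar (B j) + sigma μ A W (B j)))
        - tau μ A W := by
  exact (hasSum_fintype _).unique <| weak_paraphrase_pmi_general hmB (fun j k => hdisj j k) hcover
    (ENNReal.toReal_pos_iff.mp hAW).1.ne'
    (fun j hj => absurd hj (ENNReal.toReal_pos_iff.mp (hAsB j)).1.ne') (hasSum_fintype _)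

end AnalogiesExplained
end
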